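/- arXiv:1603.07456 — 2 statements merged into one kernel-verified Lean document; each statement's English description precedes it below -/
import Mathlib

section
/- Let θ > 0, t > 0 and f ∈ 𝒮. Then lim_{x→∞} (P_t f)'(x) = 0 and lim_{x→∞} P_t f(x) = 0. -/
open MeasureTheory Real Filter Set

/-- Complementary error function `erfc(x) = (2/√π)·∫_x^∞ e^{−y²} dy`. -/
noncomputable def erfc (x : ℝ) : ℝ :=
  (2 / Real.sqrt Real.pi) * ∫ y in Set.Ioi x, Real.exp (-y ^ 2)

/-- `g_t(x) = θ·exp(2θx + 2θ²t)·erfc(x/√(2t) + θ·√(2t))`. -/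
noncomputable def gfun (θ t x : ℝ) : ℝ :=
  θ * Real.exp (2 * θ * x + 2 * θ ^ 2 * t) *
    erfc (x / Real.sqrt (2 * t) + θ * Real.sqrt (2 * t))

/-- The Gaussian kernel `p_t(x,y) = (2πt)^{−1/2}·exp(−(y−x)²/(2t))`. -/
noncomputable def pker (t x y : ℝ) : ℝ :=
  (Real.sqrt (2 * Real.pi * t))⁻¹ * Real.exp (-(y - x) ^ 2 / (2 * t))

/-- The sticky Brownian motion semigroup:
`P_t f(x) = ∫_0^∞ (p_t(x,y) − p_t(x,−y) + 2 g_t(x+y)) f(y) dy + (1/θ) g_t(x) f(0)`. -/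
noncomputable def Pt (θ t : ℝ) (f : ℝ → ℝ) (x : ℝ) : ℝ :=
  (∫ y in Set.Ioi (0:ℝ), (pker t x y - pker t x (-y) + 2 * gfun θ t (x + y)) * f y)
    + (1 / θ) * gfun θ t x * f 0

/-- `f ∈ 𝒮`: `f` is C² on `(0,∞)`, the one-sided limits `f(0⁺)`, `f'(0⁺)`, `f''(0⁺)` exist
and are finite, and `lim_{x→∞} f(x) = 0`. -/
def memS (f : ℝ → ℝ) : Prop :=
  ContDiffOn ℝ 2 f (Set.Ioi 0) ∧
  (∃ a : ℝ, Filter.Tendsto f (nhdsWithin 0 (Set.Ioi 0)) (nhds a)) ∧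
  (∃ b : ℝ, Filter.Tendsto (deriv f) (nhdsWithin 0 (Set.Ioi 0)) (nhds b)) ∧
  (∃ c : ℝ, Filter.Tendsto (deriv (deriv f)) (nhdsWithin 0 (Set.Ioi 0)) (nhds c)) ∧
  Filter.Tendsto f Filter.atTop (nhds 0)

lemma aux_int (a : ℝ) (ha : 0 < a) : Integrable (fun u : ℝ => Real.exp (-a * |u|)) := by
  have h1 : IntegrableOn (fun u : ℝ => Real.exp (-a * |u|)) (Set.Ioi 0) := by
    refine (integrableOn_exp_mul_Ioi (a := -a) (by linarith) 0).congr_fun ?_ measurableSet_Ioi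
    intro x hx
    simp only [Set.mem_Ioi] at hx
    simp [abs_of_pos hx]
  have h2 : IntegrableOn (fun u : ℝ => Real.exp (-a * |u|)) (Set.Iic 0) := by
    refine (integrableOn_exp_mul_Iic (a := a) ha 0).congr_fun ?_ measurableSet_Iic
    intro x hx
    simp only [Set.mem_Iic] at hx
    simp [abs_of_nonpos hx]
  have := h2.union h1
  rwa [Set.Iic_union_Ioi, integrableOn_univ] at this

lemma aux_shift (a : ℝ) (ha : 0 < a) (x : ℝ) :
    Integrable (fun y : ℝ => Real.exp (-a * |x - y|)) :=
  (aux_int a ha).comp_sub_left x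

lemma conv_tendsto (k H : ℝ → ℝ) (a C M : ℝ) (ha : 0 < a)
    (hk : Continuous k) (hb : ∀ u, |k u| ≤ C * Real.exp (-a * |u|))
    (hH : Measurable H) (hM : ∀ y, |H y| ≤ M) (hlim : Tendsto H atTop (nhds 0)) :
    Tendsto (fun x => ∫ y, k (x - y) * H y) atTop (nhds 0) := by
  have e : (fun x => ∫ y, k (x - y) * H y) = fun x => ∫ u, k u * H (x - u) := by
    funext x
    rw [← integral_sub_left_eq_self (fun u => k u * H (x - u)) volume x]
    simp
  rw [e]
  have : Tendsto (fun x => ∫ u, k u * H (x - u)) atTop (nhds (∫ u : ℝ, (0:ℝ))) := by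
    refine tendsto_integral_filter_of_dominated_convergence
      (fun u => C * Real.exp (-a * |u|) * M) ?_ ?_ ?_ ?_
    · refine Eventually.of_forall fun x => ?_
      exact (hk.measurable.mul (hH.comp (measurable_const.sub measurable_id))).aestronglyMeasurable
    · refine Eventually.of_forall fun x => Eventually.of_forall fun u => ?_
      rw [Real.norm_eq_abs, abs_mul]
      exact mul_le_mul (hb u) (hM _) (abs_nonneg _) ((abs_nonneg _).trans (hb u))
    · exact ((aux_int a ha).const_mul C).mul_const M
    · refine Eventually.of_forall fun u => ?_
      have h1 : Tendsto (fun x : ℝ => x - u) atTop atTop :=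
        tendsto_atTop_add_const_right _ (-u) tendsto_id
      simpa using (hlim.comp h1).const_mul (k u)
  simpa using this

lemma conv_integrable (k H : ℝ → ℝ) (a C M : ℝ) (ha : 0 < a)
    (hk : Continuous k) (hb : ∀ u, |k u| ≤ C * Real.exp (-a * |u|))
    (hH : Measurable H) (hM : ∀ y, |H y| ≤ M) (x : ℝ) :
    Integrable (fun y => k (x - y) * H y) := by
  refine (((aux_shift a ha x).const_mul C).mul_const M).mono' ?_ ?_
  · exact ((hk.measurable.comp (measurable_const.sub measurable_id)).mul hH).aestronglyMeasurable
  · refine Eventually.of_forall fun u => ?_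
    rw [Real.norm_eq_abs, abs_mul]
    exact mul_le_mul (hb _) (hM _) (abs_nonneg _) ((abs_nonneg _).trans (hb _))

lemma conv_deriv (k k' H : ℝ → ℝ) (a C M : ℝ) (ha : 0 < a)
    (hd : ∀ u, HasDerivAt k (k' u) u) (hk' : Continuous k')
    (hb : ∀ u, |k u| ≤ C * Real.exp (-a * |u|))
    (hb' : ∀ u, |k' u| ≤ C * Real.exp (-a * |u|))
    (hH : Measurable H) (hM : ∀ y, |H y| ≤ M) (x : ℝ) :
    HasDerivAt (fun x => ∫ y, k (x - y) * H y) (∫ y, k' (x - y) * H y) x := by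
  have hk : Continuous k := continuous_iff_continuousAt.2 fun u => (hd u).continuousAt
  have hC : 0 ≤ C := by
    have := (abs_nonneg _).trans (hb 0)
    simpa using this
  refine (hasDerivAt_integral_of_dominated_loc_of_deriv_le (μ := volume)
    (F := fun x y => k (x - y) * H y) (F' := fun x y => k' (x - y) * H y)
    (bound := fun y => C * (Real.exp a * Real.exp (-a * |x - y|)) * M)
    (Metric.ball_mem_nhds x one_pos) ?_ ?_ ?_ ?_ ?_ ?_).2
  · exact Eventually.of_forall fun z =>
      (conv_integrable k H a C M ha hk hb hH hM z).aestronglyMeasurable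
  · exact conv_integrable k H a C M ha hk hb hH hM x
  · exact (conv_integrable k' H a C M ha hk' hb' hH hM x).aestronglyMeasurable
  · refine Eventually.of_forall fun y z hz => ?_
    rw [Real.norm_eq_abs, abs_mul]
    have h1 : |k' (z - y)| ≤ C * (Real.exp a * Real.exp (-a * |x - y|)) := by
      refine (hb' _).trans (mul_le_mul_of_nonneg_left ?_ hC)
      rw [← Real.exp_add]
      apply Real.exp_le_exp.2
      rw [Metric.mem_ball, Real.dist_eq, abs_sub_comm] at hz
      have h2 : |x - y| ≤ |x - z| + |z - y| := abs_sub_le x z y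
      nlinarith
    exact mul_le_mul h1 (hM _) (abs_nonneg _) ((abs_nonneg _).trans h1)
  · exact (((aux_shift a ha x).const_mul _).const_mul _).mul_const M
  · refine Eventually.of_forall fun y z hz => ?_
    have := ((hd (z - y)).comp z ((hasDerivAt_id z).sub_const y)).mul_const (H y)
    simpa using this

lemma exp_tendsto (k : ℝ → ℝ) (a C : ℝ) (ha : 0 < a)
    (hb : ∀ u, |k u| ≤ C * Real.exp (-a * |u|)) : Tendsto k atTop (nhds 0) := by
  have h : Tendsto (fun u : ℝ => C * Real.exp (-a * |u|)) atTop (nhds 0) := by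
    have h1 : Tendsto (fun u : ℝ => -a * |u|) atTop atBot :=
      tendsto_abs_atTop_atTop.const_mul_atTop_of_neg (by linarith)
    simpa using (Real.tendsto_exp_atBot.comp h1).const_mul C
  exact squeeze_zero_norm hb h

lemma gauss_bound (t a u : ℝ) (ht : 0 < t) :
    Real.exp (-u ^ 2 / (2 * t)) ≤ Real.exp (a ^ 2 * t / 2) * Real.exp (-a * |u|) := by
  rw [← Real.exp_add]
  apply Real.exp_le_exp.2
  rw [div_le_iff₀ (by positivity)]
  have : u ^ 2 = |u| ^ 2 := (sq_abs u).symm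
  rw [this]
  nlinarith [sq_nonneg (|u| - a * t)]

lemma int_gauss : Integrable (fun y : ℝ => Real.exp (-y ^ 2)) := by
  simpa using integrable_exp_neg_mul_sq (b := 1) one_pos

lemma erfc_deriv (x : ℝ) :
    HasDerivAt erfc (-(2 / Real.sqrt Real.pi) * Real.exp (-x ^ 2)) x := by
  have e : erfc = fun x => (2 / Real.sqrt Real.pi) *
      ((∫ y in Set.Ioi (0:ℝ), Real.exp (-y ^ 2)) - ∫ y in (0:ℝ)..x, Real.exp (-y ^ 2)) := by
    funext x
    unfold erfc
    rw [← intervalIntegral.integral_interval_add_Ioi (a := 0) (b := x)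
      int_gauss.integrableOn int_gauss.integrableOn]
    ring
  rw [e]
  have hc : Continuous (fun y : ℝ => Real.exp (-y ^ 2)) := by fun_prop
  have := ((hc.integral_hasStrictDerivAt 0 x).hasDerivAt.const_sub
    (∫ y in Set.Ioi (0:ℝ), Real.exp (-y ^ 2))).const_mul (2 / Real.sqrt Real.pi)
  exact this.congr_deriv (by ring)

lemma erfc_nonneg (x : ℝ) : 0 ≤ erfc x := by
  unfold erfc
  have : 0 ≤ ∫ y in Set.Ioi x, Real.exp (-y ^ 2) := integral_nonneg fun y => (Real.exp_pos _).le
  positivity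

lemma erfc_le (x : ℝ) : erfc x ≤ 2 := by
  unfold erfc
  have h : ∫ y in Set.Ioi x, Real.exp (-y ^ 2) ≤ Real.sqrt Real.pi := by
    have h1 := setIntegral_le_integral (s := Set.Ioi x) int_gauss
      (Eventually.of_forall fun y => (Real.exp_pos _).le)
    have h2 := integral_gaussian 1
    simp only [neg_mul, one_mul, div_one] at h2
    rwa [h2] at h1
  have hp : 0 < Real.sqrt Real.pi := Real.sqrt_pos.2 Real.pi_pos
  rw [div_mul_eq_mul_div, div_le_iff₀ hp]
  linarith

lemma erfc_le_exp (b x : ℝ) (hb : 0 < b) :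
    erfc x ≤ (2 / Real.sqrt Real.pi) * (Real.exp (b ^ 2 / 4) / b) * Real.exp (-b * x) := by
  unfold erfc
  rw [mul_assoc]
  refine mul_le_mul_of_nonneg_left ?_ (by positivity)
  have h1 : ∫ y in Set.Ioi x, Real.exp (-y ^ 2) ≤
      ∫ y in Set.Ioi x, Real.exp (b ^ 2 / 4) * Real.exp (-b * y) := by
    refine integral_mono int_gauss.integrableOn
      ((integrableOn_exp_mul_Ioi (by linarith) x).const_mul _) fun y => ?_
    simp only
    rw [← Real.exp_add]
    apply Real.exp_le_exp.2
    nlinarith [sq_nonneg (y - b / 2)]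
  refine h1.trans (le_of_eq ?_)
  rw [integral_const_mul, integral_exp_mul_Ioi (by linarith)]
  field_simp

lemma gfun_deriv (θ t : ℝ) (ht : 0 < t) (u : ℝ) :
    HasDerivAt (gfun θ t) (2 * θ * gfun θ t u - 2 * θ * pker t u 0) u := by
  have hs : 0 < Real.sqrt (2 * t) := Real.sqrt_pos.2 (by linarith)
  have hs2 : Real.sqrt (2 * t) ^ 2 = 2 * t := Real.sq_sqrt (by linarith)
  have h1 : HasDerivAt (fun x : ℝ => x / Real.sqrt (2 * t) + θ * Real.sqrt (2 * t))
      (1 / Real.sqrt (2 * t)) u := ((hasDerivAt_id u).div_const _).add_const _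
  have h2 := (erfc_deriv (u / Real.sqrt (2 * t) + θ * Real.sqrt (2 * t))).comp u h1
  have h3 : HasDerivAt (fun x : ℝ => 2 * θ * x + 2 * θ ^ 2 * t) (2 * θ) u := by
    simpa using ((hasDerivAt_id u).const_mul (2 * θ)).add_const (2 * θ ^ 2 * t)
  have h4 := (h3.exp.const_mul θ).mul h2
  refine h4.congr_deriv ?_
  have e : Real.exp (2 * θ * u + 2 * θ ^ 2 * t) *
      Real.exp (-(u / Real.sqrt (2 * t) + θ * Real.sqrt (2 * t)) ^ 2)
      = Real.exp (-(0 - u) ^ 2 / (2 * t)) := by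
    rw [← Real.exp_add]
    congr 1
    have : (u / Real.sqrt (2 * t) + θ * Real.sqrt (2 * t)) ^ 2
      = u ^ 2 / (2 * t) + 2 * θ * u + θ ^ 2 * (2 * t) := by
      rw [add_sq, div_pow, mul_pow, hs2]
      field_simp
    rw [this]
    ring
  have e2 : Real.sqrt (2 * Real.pi * t) = Real.sqrt Real.pi * Real.sqrt (2 * t) := by
    rw [← Real.sqrt_mul Real.pi_pos.le]; congr 1; ring
  unfold pker gfun
  rw [← e, e2]
  simp only [Function.comp]
  have hp : 0 < Real.sqrt Real.pi := Real.sqrt_pos.2 Real.pi_pos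
  field_simp
  ring

lemma gfun_bound (θ t : ℝ) (hθ : 0 < θ) (ht : 0 < t) :
    ∃ C, ∀ u, |gfun θ t u| ≤ C * Real.exp (-(2 * θ) * |u|) := by
  have hs : 0 < Real.sqrt (2 * t) := Real.sqrt_pos.2 (by linarith)
  set s := Real.sqrt (2 * t) with hsd
  set b := 4 * θ * s with hbd
  have hb : 0 < b := by positivity
  set D := (2 / Real.sqrt Real.pi) * (Real.exp (b ^ 2 / 4) / b) with hD
  have hD0 : 0 ≤ D := by positivity
  set E := Real.exp (2 * θ ^ 2 * t) with hE
  refine ⟨θ * E * (2 + D), fun u => ?_⟩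
  have hz : gfun θ t u = θ * E * (Real.exp (2 * θ * u) * erfc (u / s + θ * s)) := by
    unfold gfun
    rw [Real.exp_add]; ring
  have hnn := erfc_nonneg (u / s + θ * s)
  rw [hz, abs_of_nonneg (by positivity), mul_assoc (θ * E)]
  refine mul_le_mul_of_nonneg_left ?_ (by positivity)
  rcases le_total u 0 with h | h
  · rw [abs_of_nonpos h]
    have := erfc_le (u / s + θ * s)
    have e : -(2 * θ) * -u = 2 * θ * u := by ring
    rw [e, mul_comm]
    exact mul_le_mul_of_nonneg_right (by linarith) (Real.exp_pos _).le
  · rw [abs_of_nonneg h]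
    have h1 := erfc_le_exp b (u / s + θ * s) hb
    have h2 : Real.exp (-b * (u / s + θ * s)) ≤ Real.exp (-(4 * θ) * u) := by
      apply Real.exp_le_exp.2
      have : b * (u / s + θ * s) = 4 * θ * u + 4 * θ ^ 2 * s ^ 2 := by
        rw [hbd]; field_simp
      have h3 : 0 ≤ 4 * θ ^ 2 * s ^ 2 := by positivity
      linarith
    have h3 : erfc (u / s + θ * s) ≤ D * Real.exp (-(4 * θ) * u) :=
      h1.trans (mul_le_mul_of_nonneg_left h2 hD0)
    calc _ ≤ Real.exp (2 * θ * u) * (D * Real.exp (-(4 * θ) * u)) :=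
          mul_le_mul_of_nonneg_left h3 (Real.exp_pos _).le
      _ = D * Real.exp (-(2 * θ) * u) := by
          rw [mul_left_comm, ← Real.exp_add]; congr 2; ring
      _ ≤ _ := mul_le_mul_of_nonneg_right (by linarith) (Real.exp_pos _).le

lemma pker_bound (t a : ℝ) (ht : 0 < t) :
    ∃ C, ∀ u, |pker t u 0| ≤ C * Real.exp (-a * |u|) := by
  refine ⟨(Real.sqrt (2 * Real.pi * t))⁻¹ * Real.exp (a ^ 2 * t / 2), fun u => ?_⟩
  unfold pker
  rw [abs_of_nonneg (by positivity), mul_assoc _ (Real.exp _)]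
  have h := mul_le_mul_of_nonneg_left (gauss_bound t a u ht)
    (inv_nonneg.2 (Real.sqrt_nonneg (2 * Real.pi * t)))
  rw [zero_sub, neg_sq]
  exact h

lemma pker_deriv (t : ℝ) (u : ℝ) :
    HasDerivAt (fun u => pker t u 0) (-(u / t) * pker t u 0) u := by
  unfold pker
  have h : HasDerivAt (fun u : ℝ => -(0 - u) ^ 2 / (2 * t)) (-(u / t)) u := by
    have := (((hasDerivAt_id u).const_sub 0).pow 2).neg.div_const (2 * t)
    refine this.congr_deriv ?_
    simp
    ring
  refine (h.exp.const_mul _).congr_deriv ?_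
  ring

lemma pker_deriv_bound (t a : ℝ) (ht : 0 < t) :
    ∃ C, ∀ u, |-(u / t) * pker t u 0| ≤ C * Real.exp (-a * |u|) := by
  obtain ⟨C, hC⟩ := pker_bound t (a + 1) ht
  have hC0 : 0 ≤ C := by simpa using (abs_nonneg _).trans (hC 0)
  refine ⟨C / t, fun u => ?_⟩
  rw [abs_mul, abs_neg, abs_div, abs_of_pos ht]
  have h1 : |u| ≤ Real.exp |u| := by linarith [Real.add_one_le_exp |u|]
  calc |u| / t * |pker t u 0| ≤ Real.exp |u| / t * (C * Real.exp (-(a + 1) * |u|)) := by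
        gcongr
        exact hC u
    _ = C / t * (Real.exp |u| * Real.exp (-(a + 1) * |u|)) := by ring
    _ = _ := by rw [← Real.exp_add]; congr 2; ring

lemma f_bdd (f : ℝ → ℝ) (hf : memS f) : ∃ M, ∀ y, 0 < y → |f y| ≤ M := by
  obtain ⟨hc, ⟨a, ha⟩, -, -, hinf⟩ := hf
  have h1 := ha.abs.eventually (gt_mem_nhds (lt_add_one |a|))
  obtain ⟨δ, hδ, h1⟩ := mem_nhdsGT_iff_exists_Ioo_subset.1 h1
  have h2 := hinf.abs.eventually (gt_mem_nhds (show |(0:ℝ)| < 1 by simp))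
  obtain ⟨N, h2⟩ := eventually_atTop.1 h2
  have hδ' : 0 < δ := hδ
  obtain ⟨B, hB⟩ := (isCompact_Icc (a := δ) (b := N)).exists_bound_of_continuousOn
    (hc.continuousOn.mono fun y hy => hδ'.trans_le hy.1)
  refine ⟨max (|a| + 1) (max 1 B), fun y hy => ?_⟩
  by_cases hy1 : y < δ
  · exact (le_of_lt (h1 ⟨hy, hy1⟩)).trans (le_max_left _ _)
  · by_cases hy2 : N ≤ y
    · exact (h2 y hy2).le.trans ((le_max_left _ _).trans (le_max_right _ _))
    · exact (hB y ⟨not_lt.1 hy1, (not_le.1 hy2).le⟩).trans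
        ((le_max_right _ _).trans (le_max_right _ _))

theorem Pt_tendsto_atTop (θ t : ℝ) (hθ : 0 < θ) (ht : 0 < t)
    (f : ℝ → ℝ) (hf : memS f) :
    Filter.Tendsto (deriv (Pt θ t f)) Filter.atTop (nhds 0) ∧
    Filter.Tendsto (Pt θ t f) Filter.atTop (nhds 0) := by
  obtain ⟨M, hM⟩ := f_bdd f hf
  have hM0 : 0 ≤ M := (abs_nonneg _).trans (hM 1 one_pos)
  obtain ⟨hc, -, -, -, hinf⟩ := hf
  set F : ℝ → ℝ := (Set.Ioi (0:ℝ)).indicator f with hF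
  set G : ℝ → ℝ := fun y => F (-y) with hG
  have hFm : Measurable F := by
    refine measurable_of_restrict_of_restrict_compl (f := F) (measurableSet_Ioi (a := (0:ℝ))) ?_ ?_
    · have e : (Set.Ioi (0:ℝ)).domRestrict F = (Set.Ioi (0:ℝ)).domRestrict f := by
        funext y; simp [hF, Set.domRestrict, Set.indicator]
      rw [e]
      exact (continuousOn_iff_continuous_domRestrict.1 hc.continuousOn).measurable
    · have e : (Set.Ioi (0:ℝ))ᶜ.domRestrict F = fun _ => 0 := by
        funext y
        have := y.2
        simp only [hF, Set.domRestrict_apply]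
        exact Set.indicator_of_notMem this f
      rw [e]
      exact measurable_const
  have hGm : Measurable G := hFm.comp measurable_neg
  have hFM : ∀ y, |F y| ≤ M := by
    intro y
    by_cases hy : 0 < y
    · rw [hF, Set.indicator_of_mem (Set.mem_Ioi.2 hy)]; exact hM y hy
    · rw [hF, Set.indicator_of_notMem (by simpa using hy)]; simpa using hM0
  have hGM : ∀ y, |G y| ≤ M := fun y => hFM _
  have hFl : Tendsto F atTop (nhds 0) := by
    refine hinf.congr' ?_
    filter_upwards [eventually_gt_atTop 0] with y hy
    rw [hF, Set.indicator_of_mem (Set.mem_Ioi.2 hy)]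
  have hGl : Tendsto G atTop (nhds 0) := by
    refine tendsto_const_nhds.congr' ?_
    filter_upwards [eventually_gt_atTop 0] with y hy
    rw [hG]
    simp only [hF]
    rw [Set.indicator_of_notMem (by simp; linarith)]
  set p : ℝ → ℝ := fun u => pker t u 0 with hp
  set p' : ℝ → ℝ := fun u => -(u / t) * pker t u 0 with hp'
  set g : ℝ → ℝ := gfun θ t with hg
  set g' : ℝ → ℝ := fun u => 2 * θ * gfun θ t u - 2 * θ * pker t u 0 with hg'
  have ha : 0 < 2 * θ := by positivity
  obtain ⟨C1, hC1⟩ := pker_bound t (2 * θ) ht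
  obtain ⟨C2, hC2⟩ := pker_deriv_bound t (2 * θ) ht
  obtain ⟨C3, hC3⟩ := gfun_bound θ t hθ ht
  have hC10 : 0 ≤ C1 := by simpa using (abs_nonneg _).trans (hC1 0)
  have hC20 : 0 ≤ C2 := by simpa using (abs_nonneg _).trans (hC2 0)
  have hC30 : 0 ≤ C3 := by simpa using (abs_nonneg _).trans (hC3 0)
  have hpd : ∀ u, HasDerivAt p (p' u) u := pker_deriv t
  have hgd : ∀ u, HasDerivAt g (g' u) u := gfun_deriv θ t ht
  have hpc : Continuous p := continuous_iff_continuousAt.2 fun u => (hpd u).continuousAt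
  have hgc : Continuous g := continuous_iff_continuousAt.2 fun u => (hgd u).continuousAt
  have hpc' : Continuous p' := ((continuous_id.div_const t).neg).mul hpc
  have hgc' : Continuous g' := (hgc.const_mul _).sub (hpc.const_mul _)
  set C := C1 + C2 + C3 + (2 * θ * C3 + 2 * θ * C1) with hCd
  have hx : 0 ≤ 2 * θ * C3 := by positivity
  have hy : 0 ≤ 2 * θ * C1 := by positivity
  have bp : ∀ u, |p u| ≤ C * Real.exp (-(2 * θ) * |u|) := fun u =>
    (hC1 u).trans (mul_le_mul_of_nonneg_right (by linarith) (Real.exp_pos _).le)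
  have bp' : ∀ u, |p' u| ≤ C * Real.exp (-(2 * θ) * |u|) := fun u =>
    (hC2 u).trans (mul_le_mul_of_nonneg_right (by linarith) (Real.exp_pos _).le)
  have bg : ∀ u, |g u| ≤ C * Real.exp (-(2 * θ) * |u|) := fun u =>
    (hC3 u).trans (mul_le_mul_of_nonneg_right (by linarith) (Real.exp_pos _).le)
  have bg' : ∀ u, |g' u| ≤ C * Real.exp (-(2 * θ) * |u|) := fun u => by
    have h1 := abs_sub (2 * θ * gfun θ t u) (2 * θ * pker t u 0)
    rw [abs_mul (2 * θ), abs_mul (2 * θ), abs_of_pos ha] at h1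
    have h2 := mul_le_mul_of_nonneg_left (hC3 u) ha.le
    have h3 := mul_le_mul_of_nonneg_left (hC1 u) ha.le
    have h4 : (2 * θ * C3 + 2 * θ * C1) * Real.exp (-(2 * θ) * |u|) ≤
        C * Real.exp (-(2 * θ) * |u|) :=
      mul_le_mul_of_nonneg_right (by linarith) (Real.exp_pos _).le
    simp only [hg']
    linarith
  have key : Pt θ t f = fun x => (∫ y, p (x - y) * F y) - (∫ y, p (x - y) * G y)
      + 2 * (∫ y, g (x - y) * G y) + (1 / θ) * g x * f 0 := by
    funext x
    unfold Pt
    congr 1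
    have r : ∀ k : ℝ → ℝ, ∫ y, k (x - y) * G y = ∫ y, k (x + y) * F y := by
      intro k
      rw [← integral_neg_eq_self]
      simp [hG]
    have ri : ∀ k : ℝ → ℝ, Integrable (fun y => k (x - y) * G y) →
        Integrable (fun y => k (x + y) * F y) := by
      intro k h
      simpa [hG] using h.comp_neg
    have i1 := conv_integrable p F _ C M ha hpc bp hFm hFM x
    have i2 := ri _ (conv_integrable p G _ C M ha hpc bp hGm hGM x)
    have i12 : Integrable (fun y => p (x - y) * F y - p (x + y) * F y) := i1.sub i2
    have i3 := ri _ (conv_integrable g G _ C M ha hgc bg hGm hGM x)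
    rw [r, r, ← integral_sub i1 i2, ← integral_const_mul, ← integral_add i12 (i3.const_mul 2),
      ← integral_indicator measurableSet_Ioi]
    congr 1
    funext y
    have e1 : pker t x y = p (x - y) := by
      simp only [hp, pker]; congr 3; ring
    have e2 : pker t x (-y) = p (x + y) := by
      simp only [hp, pker]; congr 3; ring
    rw [Set.indicator_mul_right, e1, e2]
    simp only [hF, hg]
    ring
  have kd : deriv (Pt θ t f) = fun x => (∫ y, p' (x - y) * F y) - (∫ y, p' (x - y) * G y)
      + 2 * (∫ y, g' (x - y) * G y) + (1 / θ) * g' x * f 0 := by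
    funext x
    rw [key]
    have d1 := conv_deriv p p' F _ C M ha hpd hpc' bp bp' hFm hFM x
    have d2 := conv_deriv p p' G _ C M ha hpd hpc' bp bp' hGm hGM x
    have d3 := conv_deriv g g' G _ C M ha hgd hgc' bg bg' hGm hGM x
    exact (((d1.sub d2).add (d3.const_mul 2)).add
      (((hgd x).const_mul (1 / θ)).mul_const (f 0))).deriv
  constructor
  · rw [kd]
    have d1 := conv_tendsto p' F _ C M ha hpc' bp' hFm hFM hFl
    have d2 := conv_tendsto p' G _ C M ha hpc' bp' hGm hGM hGl
    have d3 := conv_tendsto g' G _ C M ha hgc' bg' hGm hGM hGl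
    simpa using ((d1.sub d2).add (d3.const_mul 2)).add
      (((exp_tendsto g' _ C ha bg').const_mul (1 / θ)).mul_const (f 0))
  · rw [key]
    have d1 := conv_tendsto p F _ C M ha hpc bp hFm hFM hFl
    have d2 := conv_tendsto p G _ C M ha hpc bp hGm hGM hGl
    have d3 := conv_tendsto g G _ C M ha hgc bg hGm hGM hGl
    simpa using ((d1.sub d2).add (d3.const_mul 2)).add
      (((exp_tendsto g _ C ha bg).const_mul (1 / θ)).mul_const (f 0))
end

section
/- Let θ > 0, λ = 2θ, t > 0, and let f : [0,∞) → ℝ be bounded and measurable. Then 2·∫_0^∞ g_t(y)·f(y) dy + (1/θ)·g_t(0)·f(0) = 2·∫_0^∞ p_t(0,y)·G_f(y) dy. (This is the identity P_t f(0) = P_t⁺ G_f(0), where P_t⁺ is the semigroup of reflected Brownian motion whose transition density from 0 is 2·p_t(0,y) on [0,∞); it expresses, in distributional form, Warren's theorem that the conditional law of the sticky Brownian motion X_t started from 0 given the driving Brownian motion W is K_{0,t}(0,·) with ∫ f dK_{0,t}(0,·) = G_f(W_t − min_{0≤u≤t} W_u).) -/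
open MeasureTheory Real Filter Set

/-- `G lam f y = f 0 · e^{-lam y} + lam · e^{-lam y} · ∫_0^y f(u) e^{lam u} du`. -/
noncomputable def G (lam : ℝ) (f : ℝ → ℝ) (y : ℝ) : ℝ :=
  f 0 * Real.exp (-lam * y) +
    lam * Real.exp (-lam * y) * ∫ u in (0:ℝ)..y, f u * Real.exp (lam * u)

lemma w_eq (θ t y : ℝ) (ht : 0 < t) :
    pker t 0 y * Real.exp (-(2 * θ) * y) = (Real.sqrt (2 * Real.pi * t))⁻¹ *
      Real.exp (2 * θ ^ 2 * t) *
      Real.exp (-((Real.sqrt (2 * t))⁻¹ * y + θ * Real.sqrt (2 * t)) ^ 2) := by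
  have h2 : Real.sqrt (2 * t) ^ 2 = 2 * t := Real.sq_sqrt (by positivity)
  have h3 : 0 < Real.sqrt (2 * t) := Real.sqrt_pos.mpr (by positivity)
  unfold pker
  rw [mul_assoc (Real.sqrt _)⁻¹, mul_assoc (Real.sqrt _)⁻¹, ← Real.exp_add, ← Real.exp_add]
  congr 2
  have : ((Real.sqrt (2 * t))⁻¹ * y + θ * Real.sqrt (2 * t)) ^ 2
      = y ^ 2 / (2 * t) + 2 * θ * y + θ ^ 2 * (2 * t) := by
    generalize Real.sqrt (2 * t) = r at h2 h3
    rw [← h2]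
    field_simp
    ring
  rw [this]
  ring

lemma gfun_eq (θ t u : ℝ) (ht : 0 < t) :
    gfun θ t u = 2 * θ * Real.exp (2 * θ * u) *
      ∫ y in Set.Ioi u, pker t 0 y * Real.exp (-(2 * θ) * y) := by
  have h3 : 0 < Real.sqrt (2 * t) := Real.sqrt_pos.mpr (by positivity)
  simp_rw [w_eq θ t _ ht]
  rw [integral_const_mul]
  have e1 : (∫ y in Set.Ioi u,
      Real.exp (-((Real.sqrt (2 * t))⁻¹ * y + θ * Real.sqrt (2 * t)) ^ 2))
      = Real.sqrt (2 * t) * ∫ y in Set.Ioi (u / Real.sqrt (2 * t) + θ * Real.sqrt (2 * t)),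
        Real.exp (-y ^ 2) := by
    have a := integral_comp_mul_left_Ioi
      (fun z => Real.exp (-(z + θ * Real.sqrt (2 * t)) ^ 2)) u (inv_pos.mpr h3)
    rw [a]
    have b := (measurePreserving_add_right volume (θ * Real.sqrt (2 * t))).setIntegral_preimage_emb
      (measurableEmbedding_addRight _) (fun z => Real.exp (-z ^ 2))
      (Set.Ioi ((Real.sqrt (2 * t))⁻¹ * u + θ * Real.sqrt (2 * t)))
    rw [Set.preimage_add_const_Ioi, add_sub_cancel_right] at b
    rw [b, inv_inv, smul_eq_mul, div_eq_inv_mul]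
  rw [e1]
  unfold gfun erfc
  have h4 : Real.sqrt (2 * Real.pi * t) = Real.sqrt Real.pi * Real.sqrt (2 * t) := by
    rw [← Real.sqrt_mul Real.pi_pos.le]; congr 1; ring
  have h5 : 0 < Real.sqrt Real.pi := Real.sqrt_pos.mpr Real.pi_pos
  rw [h4, Real.exp_add]
  field_simp

lemma gauss_int (t : ℝ) (ht : 0 < t) :
    Integrable (fun y : ℝ => Real.exp (-y ^ 2 / (4 * t))) (volume.restrict (Set.Ioi 0)) := by
  have := (integrable_exp_neg_mul_sq (b := 1 / (4 * t)) (by positivity)).restrict (s := Set.Ioi 0)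
  refine this.congr (Eventually.of_forall fun y => ?_)
  simp only
  congr 1
  ring

theorem Pt_at_zero_eq_reflected_of_G (θ lam t : ℝ) (hθ : 0 < θ) (hlam : lam = 2 * θ)
    (ht : 0 < t) (f : ℝ → ℝ) (hfm : Measurable f) (C : ℝ) (hfb : ∀ x, 0 ≤ x → |f x| ≤ C) :
    2 * (∫ y in Set.Ioi (0:ℝ), gfun θ t y * f y) + (1 / θ) * gfun θ t 0 * f 0
      = 2 * ∫ y in Set.Ioi (0:ℝ), pker t 0 y * G lam f y := by
  subst hlam
  have hC : 0 ≤ C := (abs_nonneg _).trans (hfb 0 le_rfl)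
  have hpc : Continuous (fun y => pker t 0 y) := by unfold pker; fun_prop
  set w : ℝ → ℝ := fun y => pker t 0 y * Real.exp (-(2 * θ) * y) with hw
  set h : ℝ → ℝ := fun u => f u * Real.exp (2 * θ * u) with hh
  have hwc : Continuous w := by rw [hw]; fun_prop
  have hhm : Measurable h := by rw [hh]; fun_prop
  set c := (Real.sqrt (2 * Real.pi * t))⁻¹ with hc
  have hc0 : 0 ≤ c := by positivity
  set μ : Measure ℝ := volume.restrict (Set.Ioi (0:ℝ)) with hμ
  have hpos : ∀ᵐ y ∂μ, 0 < y := ae_restrict_mem measurableSet_Ioi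
  have hpe : ∀ y, pker t 0 y = c * (Real.exp (-y ^ 2 / (4 * t)) * Real.exp (-y ^ 2 / (4 * t))) := by
    intro y
    unfold pker
    rw [← Real.exp_add, sub_zero, hc]
    congr 2
    field_simp
    ring
  have hg := gauss_int t ht
  set F : ℝ × ℝ → ℝ := fun p => if p.2 ≤ p.1 then w p.1 * h p.2 else 0 with hF
  have hFm : Measurable F := by
    refine Measurable.ite (measurableSet_le measurable_snd measurable_fst) ?_ measurable_const
    exact (hwc.measurable.comp measurable_fst).mul (hhm.comp measurable_snd)
  have hFi : Integrable F (μ.prod μ) := by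
    refine Integrable.mono' ((hg.mul_prod hg).const_mul (c * C)) hFm.aestronglyMeasurable ?_
    have : μ.prod μ = (volume.prod volume).restrict (Set.Ioi 0 ×ˢ Set.Ioi 0) :=
      Measure.prod_restrict _ _
    rw [this]
    filter_upwards [ae_restrict_mem (measurableSet_Ioi.prod measurableSet_Ioi)] with p hp
    obtain ⟨hp1, hp2⟩ := hp
    obtain ⟨y, u⟩ := p
    simp only [Set.mem_Ioi] at hp1 hp2
    simp only [hF]
    split_ifs with hle
    · have hfu := hfb u hp2.le
      have e1 : w y * h u = c * f u * (Real.exp (-y ^ 2 / (4 * t)) *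
          (Real.exp (-y ^ 2 / (4 * t)) * Real.exp (2 * θ * u - 2 * θ * y))) := by
        simp only [hw, hh, hpe, sub_eq_add_neg, Real.exp_add, neg_mul]
        ring
      have e2 : Real.exp (-y ^ 2 / (4 * t)) * Real.exp (2 * θ * u - 2 * θ * y)
          ≤ Real.exp (-u ^ 2 / (4 * t)) := by
        rw [← Real.exp_add]
        apply Real.exp_le_exp.mpr
        have : -y ^ 2 / (4 * t) ≤ -u ^ 2 / (4 * t) := by gcongr
        nlinarith
      rw [e1, norm_mul, norm_mul, Real.norm_eq_abs, Real.norm_eq_abs, Real.norm_eq_abs,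
        abs_of_nonneg hc0]
      rw [abs_of_nonneg (a := Real.exp _ * _) (by positivity)]
      gcongr
    · rw [norm_zero]; positivity
  have hswap := integral_integral_swap (f := fun y u => F (y, u)) hFi
  have hwi : Integrable w μ := by
    refine Integrable.mono' (hg.const_mul c) hwc.aestronglyMeasurable ?_
    filter_upwards [hpos] with y hy
    have e0 : 0 ≤ w y := by simp only [hw, hpe]; positivity
    rw [Real.norm_eq_abs, abs_of_nonneg e0]
    simp only [hw, hpe]
    have h1 : Real.exp (-y ^ 2 / (4 * t)) ≤ 1 := Real.exp_le_one_iff.mpr (by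
      rw [neg_div]; exact neg_nonpos.mpr (by positivity))
    have h2 : Real.exp (-(2 * θ) * y) ≤ 1 := Real.exp_le_one_iff.mpr (by nlinarith)
    calc c * (Real.exp (-y ^ 2 / (4 * t)) * Real.exp (-y ^ 2 / (4 * t))) * Real.exp (-(2 * θ) * y)
        ≤ c * (Real.exp (-y ^ 2 / (4 * t)) * 1) * 1 := by gcongr
      _ = _ := by ring
  have inner1 : ∀ y, 0 < y → ∫ u, F (y, u) ∂μ = w y * ∫ u in (0:ℝ)..y, h u := by
    intro y hy
    rw [intervalIntegral.integral_of_le hy.le, ← integral_const_mul]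
    have : (fun u => F (y, u)) = (Set.Iic y).indicator (fun u => w y * h u) := by
      ext u; simp [hF, Set.indicator_apply]
    rw [this, integral_indicator measurableSet_Iic, hμ, Measure.restrict_restrict measurableSet_Iic,
      Set.inter_comm, Set.Ioi_inter_Iic]
  have inner2 : ∀ u, 0 < u → ∫ y, F (y, u) ∂μ = (∫ y in Set.Ioi u, w y) * h u := by
    intro u hu
    rw [← integral_Ici_eq_integral_Ioi (x := u), ← integral_mul_const]
    have : (fun y => F (y, u)) = (Set.Ici u).indicator (fun y => w y * h u) := by
      ext y; simp [hF, Set.indicator_apply]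
    have hs : Set.Ici u ∩ Set.Ioi 0 = Set.Ici u :=
      Set.inter_eq_left.mpr fun x hx => lt_of_lt_of_le hu hx
    rw [this, integral_indicator measurableSet_Ici, hμ, Measure.restrict_restrict measurableSet_Ici,
      hs]
  have hR : ∫ y, pker t 0 y * G (2 * θ) f y ∂μ
      = f 0 * (∫ y, w y ∂μ) + 2 * θ * ∫ y, ∫ u, F (y, u) ∂μ ∂μ := by
    rw [← integral_const_mul, ← integral_const_mul, ← integral_add (hwi.const_mul _)
      (hFi.integral_prod_left.const_mul _)]
    refine integral_congr_ae ?_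
    filter_upwards [hpos] with y hy
    rw [inner1 y hy]
    simp only [G, hw, hh]
    ring
  have hL : ∫ y, gfun θ t y * f y ∂μ = 2 * θ * ∫ u, ∫ y, F (y, u) ∂μ ∂μ := by
    rw [← integral_const_mul]
    refine integral_congr_ae ?_
    filter_upwards [hpos] with u hu
    rw [inner2 u hu, gfun_eq θ t u ht]
    simp only [hh]
    ring
  have hg0 : gfun θ t 0 = 2 * θ * ∫ y, w y ∂μ := by
    rw [gfun_eq θ t 0 ht, mul_zero, Real.exp_zero, mul_one]
  rw [hL, hR, hswap, hg0]
  field_simp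
  ring
end
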